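/- Assume hypothesis (H) and fix a straight mesh on [a,c]. Then there exists a unique ν* > 0 such that ũ_{ν*}(c) = u_b. -/

import Mathlib

open Set Filter

noncomputable section

/-- Partial derivative of a two-argument function with respect to its first argument. -/
def pd1 (f : ℝ → ℝ → ℝ) (u x : ℝ) : ℝ := deriv (fun t => f t x) u

/-- Partial derivative of a two-argument function with respect to its second argument. -/
def pd2 (f : ℝ → ℝ → ℝ) (u x : ℝ) : ℝ := deriv (fun s => f u s) x

/-- The nonlinearity `𝒩(u,x) = N(u,x)·u`. -/
def Ncal (N : ℝ → ℝ → ℝ) (u x : ℝ) : ℝ := N u x * u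

/-- `u` is twice continuously differentiable on `s`, with first derivative `u'`
and second derivative `u''` (derivatives within `s`). -/
def IsC2On (u u' u'' : ℝ → ℝ) (s : Set ℝ) : Prop :=
  (∀ x ∈ s, HasDerivWithinAt u (u' x) s x) ∧
  (∀ x ∈ s, HasDerivWithinAt u' (u'' x) s x) ∧
  ContinuousOn u'' s

/-- The straight boundary value problem: `u ∈ C²([a,b])`, `u'' = 𝒩(u(x),x)` on `[a,b]`,
`u(a) = 0`, `u(b) = ub`. -/
def IsStraightBVP (N : ℝ → ℝ → ℝ) (a b ub : ℝ) (u u' u'' : ℝ → ℝ) : Prop :=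
  IsC2On u u' u'' (Icc a b) ∧
  (∀ x ∈ Icc a b, u'' x = Ncal N (u x) x) ∧
  u a = 0 ∧ u b = ub

/-- Hypothesis (H): `N`, `∂N/∂x`, `∂N/∂u`, `∂²N/∂x∂u`, `∂²N/∂u²` are all
nonnegative for `u ≥ 0` and `x ∈ [a,b]`. -/
def HypH (N : ℝ → ℝ → ℝ) (a b : ℝ) : Prop :=
  ∀ u : ℝ, 0 ≤ u → ∀ x ∈ Icc a b,
    0 ≤ N u x ∧ 0 ≤ pd2 N u x ∧ 0 ≤ pd1 N u x ∧
    0 ≤ pd2 (pd1 N) u x ∧ 0 ≤ pd1 (pd1 N) u x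

/-- A mesh: finitely many strictly increasing points `pt 0 < pt 1 < ⋯ < pt n`. -/
structure Mesh where
  n : ℕ
  pt : ℕ → ℝ
  npos : 0 < n
  mono : ∀ i < n, pt i < pt (i + 1)

/-- The coefficient `α_i(p,q,x)` of the straight discretized equation,
where `xi` is the mesh point `x_i`. -/
def alphaC (N : ℝ → ℝ → ℝ) (xi p q x : ℝ) : ℝ :=
  (pd1 N q xi * p + pd2 N q xi) * (x - xi) + N q xi

/-- The coefficient `β_i(p,q,v)` of the inverse discretized equation,
where `ui` is the (shifted) mesh point `ū_i`. -/
def betaC (N : ℝ → ℝ → ℝ) (ui p q v : ℝ) : ℝ :=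
  -(pd1 (Ncal N) ui q + pd2 (Ncal N) ui q * p) * (v - ui) - Ncal N ui q

/-- Shifted mesh knots `ū_i = max(u_i, s)`. -/
def ubar (m : Mesh) (s : ℝ) (i : ℕ) : ℝ := max (m.pt i) s

/-- A straight scheme solution on `[a,c]` with respect to the mesh `m`:
`ũ ∈ C¹([a,c])` and on each mesh subinterval `[x_i, x_{i+1}]` the second
derivative of `ũ` equals `α_i(ũ'(x_i), ũ(x_i), x)·ũ(x)`. -/
def IsStraightSol (N : ℝ → ℝ → ℝ) (a c : ℝ) (m : Mesh) (u u' : ℝ → ℝ) : Prop :=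
  (∀ x ∈ Icc a c, HasDerivWithinAt u (u' x) (Icc a c) x) ∧
  ContinuousOn u' (Icc a c) ∧
  ∀ i < m.n, ∀ x ∈ Icc (m.pt i) (m.pt (i + 1)),
    HasDerivWithinAt u'
      (alphaC N (m.pt i) (u' (m.pt i)) (u (m.pt i)) x * u x)
      (Icc (m.pt i) (m.pt (i + 1))) x

/-- An inverse scheme solution on `[s, ub]` with respect to the mesh `m` (shifted by `s`):
`x̃ ∈ C¹([s,ub])` and on each subinterval `[ū_i, ū_{i+1}]` the second derivative of `x̃`
equals `β_i(x̃'(ū_i), x̃(ū_i), v)·(x̃'(v))³`. -/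
def IsInvSol (N : ℝ → ℝ → ℝ) (ub : ℝ) (m : Mesh) (s : ℝ) (X X' : ℝ → ℝ) : Prop :=
  (∀ v ∈ Icc s ub, HasDerivWithinAt X (X' v) (Icc s ub) v) ∧
  ContinuousOn X' (Icc s ub) ∧
  ∀ i < m.n, ∀ v ∈ Icc (ubar m s i) (ubar m s (i + 1)),
    HasDerivWithinAt X'
      (betaC N (ubar m s i) (X' (ubar m s i)) (X (ubar m s i)) v * (X' v) ^ 3)
      (Icc (ubar m s i) (ubar m s (i + 1))) v

/-- A scheme pair `(ũ, x̃)`. -/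
def IsSchemePair (N : ℝ → ℝ → ℝ) (a b c ub : ℝ) (ms mi : Mesh)
    (u u' X X' : ℝ → ℝ) : Prop :=
  IsStraightSol N a c ms u u' ∧ u a = 0 ∧ 0 < u c ∧ u c < ub ∧ u' c ≠ 0 ∧
  IsInvSol N ub mi (u c) X X' ∧ X ub = b ∧ X (u c) = c ∧ X' (u c) = 1 / u' c

/-- A scheme pair additionally satisfying the sign inequalities
`0 < ũ < u_b`, `ũ' > 0`, `ũ'' ≥ 0` on `(a,c]`, and `c < x̃`, `x̃' > 0`, `x̃'' ≤ 0`
on `(ũ(c), u_b]` (second derivatives taken on the mesh subintervals). -/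
def GoodPair (N : ℝ → ℝ → ℝ) (a b c ub : ℝ) (ms mi : Mesh)
    (u u' X X' : ℝ → ℝ) : Prop :=
  IsSchemePair N a b c ub ms mi u u' X X' ∧
  (∀ x ∈ Ioc a c, 0 < u x ∧ u x < ub ∧ 0 < u' x) ∧
  (∀ i < ms.n, ∀ x ∈ Icc (ms.pt i) (ms.pt (i + 1)), x ∈ Ioc a c →
    0 ≤ alphaC N (ms.pt i) (u' (ms.pt i)) (u (ms.pt i)) x * u x) ∧
  (∀ v ∈ Ioc (u c) ub, c < X v ∧ 0 < X' v) ∧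
  (∀ i < mi.n, ∀ v ∈ Icc (ubar mi (u c) i) (ubar mi (u c) (i + 1)), v ∈ Ioc (u c) ub →
    betaC N (ubar mi (u c) i) (X' (ubar mi (u c) i)) (X (ubar mi (u c) i)) v * (X' v) ^ 3 ≤ 0)

/-- All steps of the straight mesh `ms` and of the (shifted) inverse mesh `mi`
are of size at most `h`. -/
def StepLe (ms mi : Mesh) (s h : ℝ) : Prop :=
  (∀ i < ms.n, ms.pt (i + 1) - ms.pt i ≤ h) ∧
  (∀ i < mi.n, ubar mi s (i + 1) - ubar mi s i ≤ h)

section PartialDerivatives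

variable {N : ℝ → ℝ → ℝ}

theorem pd1_eq_fderiv (hN : ContDiff ℝ 2 (Function.uncurry N)) (u x : ℝ) :
    pd1 N u x = fderiv ℝ (Function.uncurry N) (u, x) (1, 0) := by
  have hF := (hN.differentiable (by norm_num) (u, x)).hasFDerivAt
  exact (hF.comp_hasDerivAt (f := fun t : ℝ => (t, x)) u
    ((hasDerivAt_id u).prodMk (hasDerivAt_const u x))).deriv

theorem pd2_eq_fderiv (hN : ContDiff ℝ 2 (Function.uncurry N)) (u x : ℝ) :
    pd2 N u x = fderiv ℝ (Function.uncurry N) (u, x) (0, 1) := by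
  have hF := (hN.differentiable (by norm_num) (u, x)).hasFDerivAt
  exact (hF.comp_hasDerivAt (f := fun s : ℝ => (u, s)) x
    ((hasDerivAt_const x u).prodMk (hasDerivAt_id x))).deriv

theorem hasFDerivAt_fderiv_uncurry_apply (hN : ContDiff ℝ 2 (Function.uncurry N))
    (z w : ℝ × ℝ) :
    HasFDerivAt (fun y => fderiv ℝ (Function.uncurry N) y w)
      ((fderiv ℝ (fderiv ℝ (Function.uncurry N)) z).flip w) z := by
  have h1 : ContDiff ℝ 1 (fderiv ℝ (Function.uncurry N)) :=
    hN.fderiv_right (by norm_num)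
  have h2 := (h1.differentiable (by norm_num) z).hasFDerivAt
  simpa using h2.clm_apply (hasFDerivAt_const w z)

theorem hasDerivAt_pd1_left (hN : ContDiff ℝ 2 (Function.uncurry N)) (u x : ℝ) :
    HasDerivAt (fun t => pd1 N t x) (pd1 (pd1 N) u x) u := by
  simp only [pd1_eq_fderiv hN]
  have h := (hasFDerivAt_fderiv_uncurry_apply hN (u, x) (1, 0)).comp_hasDerivAt
    (f := fun t : ℝ => (t, x)) u ((hasDerivAt_id u).prodMk (hasDerivAt_const u x))
  have h' : pd1 (pd1 N) u x =
      ((fderiv ℝ (fderiv ℝ (Function.uncurry N)) (u, x)).flip (1, 0)) (1, 0) := by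
    rw [← h.deriv]
    unfold pd1
    congr 1
    ext t
    exact pd1_eq_fderiv hN t x
  rw [h']
  exact h

theorem hasDerivAt_pd2_left (hN : ContDiff ℝ 2 (Function.uncurry N)) (u x : ℝ) :
    HasDerivAt (fun t => pd2 N t x) (pd2 (pd1 N) u x) u := by
  simp only [pd2_eq_fderiv hN]
  have h := (hasFDerivAt_fderiv_uncurry_apply hN (u, x) (0, 1)).comp_hasDerivAt
    (f := fun t : ℝ => (t, x)) u ((hasDerivAt_id u).prodMk (hasDerivAt_const u x))
  have h2 := (hasFDerivAt_fderiv_uncurry_apply hN (u, x) (1, 0)).comp_hasDerivAt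
    (f := fun s : ℝ => (u, s)) x ((hasDerivAt_const x u).prodMk (hasDerivAt_id x))
  have hsymm : IsSymmSndFDerivAt ℝ (Function.uncurry N) (u, x) :=
    hN.contDiffAt.isSymmSndFDerivAt (by simp)
  have h' : pd2 (pd1 N) u x =
      ((fderiv ℝ (fderiv ℝ (Function.uncurry N)) (u, x)).flip (0, 1)) (1, 0) := by
    rw [ContinuousLinearMap.flip_apply, hsymm (1, 0) (0, 1),
      ← ContinuousLinearMap.flip_apply, ← h2.deriv]
    unfold pd2
    congr 1
    ext s
    exact pd1_eq_fderiv hN u s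
  rw [h']
  exact h

theorem hasDerivAt_left (hN : ContDiff ℝ 2 (Function.uncurry N)) (u x : ℝ) :
    HasDerivAt (fun t => N t x) (pd1 N u x) u := by
  rw [pd1_eq_fderiv hN]
  exact (hN.differentiable (by norm_num) (u, x)).hasFDerivAt.comp_hasDerivAt
    (f := fun t : ℝ => (t, x)) u ((hasDerivAt_id u).prodMk (hasDerivAt_const u x))

theorem monotoneOn_Ici_of_hasDerivAt_nonneg {f f' : ℝ → ℝ} {s : ℝ}
    (hf : ∀ t, HasDerivAt f (f' t) t) (hf' : ∀ t, s ≤ t → 0 ≤ f' t) :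
    MonotoneOn f (Ici s) :=
  monotoneOn_of_hasDerivWithinAt_nonneg (convex_Ici s)
    (fun t _ => (hf t).continuousAt.continuousWithinAt)
    (fun t _ => (hf t).hasDerivWithinAt) (fun t ht => hf' t (interior_subset ht))

theorem alphaC_nonneg {a b xi p q x : ℝ} (hH : HypH N a b) (hxi : xi ∈ Icc a b)
    (hp : 0 ≤ p) (hq : 0 ≤ q) (hx : xi ≤ x) : 0 ≤ alphaC N xi p q x := by
  obtain ⟨h0, h2, h1, -, -⟩ := hH q hq xi hxi
  have := sub_nonneg.2 hx
  unfold alphaC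
  positivity

theorem alphaC_mono {a b xi p₁ p₂ q₁ q₂ x : ℝ} (hN : ContDiff ℝ 2 (Function.uncurry N))
    (hH : HypH N a b) (hxi : xi ∈ Icc a b) (hp₁ : 0 ≤ p₁) (hp : p₁ ≤ p₂)
    (hq₁ : 0 ≤ q₁) (hq : q₁ ≤ q₂) (hx : xi ≤ x) :
    alphaC N xi p₁ q₁ x ≤ alphaC N xi p₂ q₂ x := by
  have hq₂ : 0 ≤ q₂ := hq₁.trans hq
  have m0 : N q₁ xi ≤ N q₂ xi := monotoneOn_Ici_of_hasDerivAt_nonneg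
    (fun t => hasDerivAt_left hN t xi) (fun t ht => (hH t ht xi hxi).2.2.1) hq₁ hq₂ hq
  have m1 : pd1 N q₁ xi ≤ pd1 N q₂ xi := monotoneOn_Ici_of_hasDerivAt_nonneg
    (fun t => hasDerivAt_pd1_left hN t xi) (fun t ht => (hH t ht xi hxi).2.2.2.2) hq₁ hq₂ hq
  have m2 : pd2 N q₁ xi ≤ pd2 N q₂ xi := monotoneOn_Ici_of_hasDerivAt_nonneg
    (fun t => hasDerivAt_pd2_left hN t xi) (fun t ht => (hH t ht xi hxi).2.2.2.1) hq₁ hq₂ hq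
  have h1 : 0 ≤ pd1 N q₂ xi := (hH q₂ hq₂ xi hxi).2.2.1
  have := sub_nonneg.2 hx
  unfold alphaC
  gcongr

end PartialDerivatives

section LinearEquation

/-- `u'' = α u` on `s`, where `u'` is the first derivative of `u`. -/
def SolvesLinearOn (α u u' : ℝ → ℝ) (s : Set ℝ) : Prop :=
  ∀ x ∈ s, HasDerivWithinAt u (u' x) s x ∧ HasDerivWithinAt u' (α x * u x) s x

theorem growth_of_convex_where_nonneg {w w' g : ℝ → ℝ} {x₀ x₁ : ℝ}
    (hw : ∀ x ∈ Icc x₀ x₁, HasDerivWithinAt w (w' x) (Icc x₀ x₁) x)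
    (hw' : ∀ x ∈ Icc x₀ x₁, HasDerivWithinAt w' (g x) (Icc x₀ x₁) x)
    (hg : ∀ x ∈ Icc x₀ x₁, 0 ≤ w x → 0 ≤ g x)
    (h0 : 0 ≤ w x₀) (h1 : 0 < w' x₀) :
    ∀ x ∈ Icc x₀ x₁, w x₀ + w' x₀ * (x - x₀) ≤ w x ∧ w' x₀ ≤ w' x := by
  have key : ∀ y ∈ Icc x₀ x₁, (∀ x ∈ Ioo x₀ y, 0 ≤ w' x) →
      ∀ x ∈ Icc x₀ y, w' x₀ ≤ w' x := by
    intro y hy hpos x hx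
    have hsub : Icc x₀ y ⊆ Icc x₀ x₁ := Icc_subset_Icc_right hy.2
    have hint : interior (Icc x₀ y) ⊆ Icc x₀ y := interior_subset
    have hx0 : x₀ ∈ Icc x₀ y := ⟨le_rfl, hy.1⟩
    have mw : MonotoneOn w (Icc x₀ y) := monotoneOn_of_hasDerivWithinAt_nonneg (convex_Icc _ _)
      (fun t ht => ((hw t (hsub ht)).mono hsub).continuousWithinAt)
      (fun t ht => (hw t (hsub (hint ht))).mono (hint.trans hsub))
      (fun t ht => hpos t (by rwa [interior_Icc] at ht))
    have mw' : MonotoneOn w' (Icc x₀ y) := monotoneOn_of_hasDerivWithinAt_nonneg (convex_Icc _ _)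
      (fun t ht => ((hw' t (hsub ht)).mono hsub).continuousWithinAt)
      (fun t ht => (hw' t (hsub (hint ht))).mono (hint.trans hsub))
      (fun t ht => hg t (hsub (hint ht)) (h0.trans (mw hx0 (hint ht) (hint ht).1)))
    exact mw' hx0 hx hx.1
  have hpos : ∀ x ∈ Icc x₀ x₁, 0 < w' x := by
    by_contra! hne
    have hcont : ContinuousOn w' (Icc x₀ x₁) := fun t ht => (hw' t ht).continuousWithinAt
    have hcomp : IsCompact (Icc x₀ x₁ ∩ w' ⁻¹' Iic 0) :=
      isCompact_Icc.of_isClosed_subset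
        (hcont.preimage_isClosed_of_isClosed isClosed_Icc isClosed_Iic) inter_subset_left
    obtain ⟨y, ⟨hy, hy0⟩, hleast⟩ := hcomp.exists_isLeast
      (let ⟨x, hx, hx0⟩ := hne; ⟨x, hx, hx0⟩)
    have := key y hy (fun x hx => by
      by_contra! hlt
      exact absurd (hleast ⟨⟨hx.1.le, hx.2.le.trans hy.2⟩, hlt.le⟩) (not_le.2 hx.2)) y ⟨hy.1, le_rfl⟩
    exact absurd hy0 (not_le.2 (h1.trans_le this))
  intro x hx
  have hx01 : x₀ ≤ x₁ := hx.1.trans hx.2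
  have hw'_le : ∀ y ∈ Icc x₀ x₁, w' x₀ ≤ w' y :=
    key x₁ ⟨hx01, le_rfl⟩ (fun y hy => (hpos y (Ioo_subset_Icc_self hy)).le)
  refine ⟨?_, hw'_le x hx⟩
  have hd : ∀ t ∈ Icc x₀ x₁, HasDerivWithinAt (fun t => w t - w' x₀ * (t - x₀))
      (w' t - w' x₀ * 1) (Icc x₀ x₁) t := fun t ht =>
    (hw t ht).sub (((hasDerivWithinAt_id t _).sub_const x₀).const_mul (w' x₀))
  have hint : interior (Icc x₀ x₁) ⊆ Icc x₀ x₁ := interior_subset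
  have hm := monotoneOn_of_hasDerivWithinAt_nonneg (convex_Icc x₀ x₁)
    (fun t ht => (hd t ht).continuousWithinAt) (fun t ht => (hd t (hint ht)).mono hint)
    (fun t ht => by linarith [hw'_le t (hint ht)]) ⟨le_rfl, hx01⟩ hx hx.1
  simp only [sub_self, mul_zero, sub_zero] at hm
  linarith

theorem dist_le_of_solvesLinearOn {α β u u' v v' : ℝ → ℝ} {x₀ x₁ δ ε K : ℝ} (hK : 1 ≤ K)
    (hu : SolvesLinearOn α u u' (Icc x₀ x₁)) (hv : SolvesLinearOn β v v' (Icc x₀ x₁))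
    (hα : ∀ x ∈ Icc x₀ x₁, |α x| ≤ K) (hε : ∀ x ∈ Icc x₀ x₁, |β x - α x| * |v x| ≤ ε)
    (hε0 : 0 ≤ ε) (hδ : dist (u x₀, u' x₀) (v x₀, v' x₀) ≤ δ) :
    ∀ x ∈ Icc x₀ x₁, dist (u x, u' x) (v x, v' x) ≤ gronwallBound δ K ε (x - x₀) := by
  have right {w w' γ : ℝ → ℝ} (h : SolvesLinearOn γ w w' (Icc x₀ x₁)) :
      ContinuousOn (fun t => (w t, w' t)) (Icc x₀ x₁) ∧ ∀ t ∈ Ico x₀ x₁,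
        HasDerivWithinAt (fun t => (w t, w' t)) (w' t, γ t * w t) (Ici t) t := by
    refine ⟨fun t ht => ((h t ht).1.prodMk (h t ht).2).continuousWithinAt, fun t ht => ?_⟩
    have h' := h t (Ico_subset_Icc_self ht)
    exact (h'.1.prodMk h'.2).mono_of_mem_nhdsWithin
      (mem_of_superset (Icc_mem_nhdsGE ht.2) (Icc_subset_Icc_left ht.1))
  have hlip : ∀ t ∈ Ico x₀ x₁, LipschitzOnWith K.toNNReal
      (fun y : ℝ × ℝ => (y.2, α t * y.1)) univ := by
    intro t ht
    refine LipschitzWith.lipschitzOnWith (LipschitzWith.of_dist_le_mul fun y z => ?_)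
    rw [Real.coe_toNNReal K (by linarith), Prod.dist_eq, Prod.dist_eq]
    refine max_le ?_ ?_
    · exact (le_max_right _ _).trans (le_mul_of_one_le_left (by positivity) hK)
    · rw [Real.dist_eq, ← mul_sub, abs_mul, ← Real.dist_eq]
      exact mul_le_mul (hα t (Ico_subset_Icc_self ht)) (le_max_left _ _) (by positivity)
        (by linarith)
  have := dist_le_of_approx_trajectories_ODE_of_mem (εf := 0) (εg := ε) (s := fun _ => univ)
    hlip (right hu).1 (right hu).2 (fun t _ => (dist_self _).le) (fun _ _ => trivial)
    (right hv).1 (right hv).2 (fun t ht => by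
      have := hε t (Ico_subset_Icc_self ht)
      rw [Prod.dist_eq, dist_self, Real.dist_eq, ← sub_mul, abs_mul]
      exact max_le hε0 this) (fun _ _ => trivial) hδ
  rwa [Real.coe_toNNReal K (by linarith), zero_add] at this

theorem SolvesLinearOn.eq_zero {α u u' : ℝ → ℝ} {x₀ x₁ : ℝ}
    (hu : SolvesLinearOn α u u' (Icc x₀ x₁)) (hα : ContinuousOn α (Icc x₀ x₁))
    (h0 : u x₀ = 0) (h1 : u' x₀ = 0) : ∀ x ∈ Icc x₀ x₁, u x = 0 ∧ u' x = 0 := by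
  obtain ⟨K, hK⟩ := isCompact_Icc.exists_bound_of_continuousOn hα
  have hz : SolvesLinearOn α 0 0 (Icc x₀ x₁) := fun x _ => by
    have h : HasDerivWithinAt (0 : ℝ → ℝ) 0 (Icc x₀ x₁) x := hasDerivWithinAt_const x _ (0 : ℝ)
    exact ⟨h, by simpa using h⟩
  intro x hx
  have := dist_le_of_solvesLinearOn (le_max_left 1 K) hu hz
    (fun x hx => (hK x hx).trans (le_max_right _ _)) (ε := 0) (by simp) le_rfl
    (δ := 0) (by simp [h0, h1]) x hx
  rw [gronwallBound_ε0_δ0] at this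
  simpa using dist_le_zero.1 this

theorem tendsto_of_solvesLinearOn {ι : Type*} {l : Filter ι} {u u' : ι → ℝ → ℝ}
    {v v' : ℝ → ℝ} {m k : ι → ℝ} {m₀ k₀ x₀ x₁ : ℝ}
    (hm : Tendsto m l (nhds m₀)) (hk : Tendsto k l (nhds k₀))
    (hu : ∀ᶠ s in l, SolvesLinearOn (fun x => m s * (x - x₀) + k s) (u s) (u' s) (Icc x₀ x₁))
    (hv : SolvesLinearOn (fun x => m₀ * (x - x₀) + k₀) v v' (Icc x₀ x₁))
    (h0 : Tendsto (fun s => u s x₀) l (nhds (v x₀)))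
    (h1 : Tendsto (fun s => u' s x₀) l (nhds (v' x₀))) :
    ∀ x ∈ Icc x₀ x₁, Tendsto (fun s => u s x) l (nhds (v x)) ∧
      Tendsto (fun s => u' s x) l (nhds (v' x)) := by
  intro y hy
  have h01 : x₀ ≤ x₁ := hy.1.trans hy.2
  obtain ⟨M, hM⟩ := isCompact_Icc.exists_bound_of_continuousOn
    (fun t ht => (hv t ht).1.continuousWithinAt : ContinuousOn v (Icc x₀ x₁))
  have hM0 : 0 ≤ M := (norm_nonneg _).trans (hM x₀ ⟨le_rfl, h01⟩)
  have hh : 0 ≤ x₁ - x₀ := sub_nonneg.2 h01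
  set K : ℝ := |m₀| * (x₁ - x₀) + |k₀| + 1 with hKdef
  have hK1 : 1 ≤ K := by rw [hKdef]; linarith [mul_nonneg (abs_nonneg m₀) hh, abs_nonneg k₀]
  have hKlim : ∀ᶠ s in l, |m s| * (x₁ - x₀) + |k s| < K :=
    ((hm.abs.mul_const _).add hk.abs).eventually_lt_const (by rw [hKdef]; linarith)
  set ε : ι → ℝ := fun s => (|m₀ - m s| * (x₁ - x₀) + |k₀ - k s|) * M with hε
  set δ : ι → ℝ := fun s => dist (u s x₀, u' s x₀) (v x₀, v' x₀) with hδ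
  have hεlim : Tendsto ε l (nhds 0) := by
    simpa using (((hm.const_sub m₀).abs.mul_const (x₁ - x₀)).add (hk.const_sub k₀).abs).mul_const M
  have hδlim : Tendsto δ l (nhds 0) :=
    tendsto_iff_dist_tendsto_zero.1 (h0.prodMk_nhds h1)
  have hbound : Tendsto (fun s => gronwallBound (δ s) K (ε s) (y - x₀)) l (nhds 0) := by
    simp only [gronwallBound_of_K_ne_0 (show K ≠ 0 by linarith)]
    simpa using (hδlim.mul_const _).add ((hεlim.div_const K).mul_const _)
  have affine_le (p q x : ℝ) (hx : x ∈ Icc x₀ x₁) :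
      |p * (x - x₀) + q| ≤ |p| * (x₁ - x₀) + |q| := by
    refine (abs_add_le _ _).trans ?_
    rw [abs_mul, abs_of_nonneg (sub_nonneg.2 hx.1)]
    gcongr
    exact hx.2
  have hdist : Tendsto (fun s => dist (u s y, u' s y) (v y, v' y)) l (nhds 0) := by
    refine squeeze_zero' (Eventually.of_forall fun _ => dist_nonneg) ?_ hbound
    filter_upwards [hu, hKlim] with s hus hKs
    refine dist_le_of_solvesLinearOn hK1 hus hv
      (fun x hx => (affine_le _ _ x hx).trans hKs.le) (fun x hx => ?_) (by positivity)
      le_rfl y hy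
    refine mul_le_mul ?_ (hM x hx) (abs_nonneg _) (by positivity)
    rw [show m₀ * (x - x₀) + k₀ - (m s * (x - x₀) + k s) =
      (m₀ - m s) * (x - x₀) + (k₀ - k s) by ring]
    exact affine_le _ _ x hx
  have := tendsto_iff_dist_tendsto_zero.2 hdist
  exact ⟨(continuous_fst.tendsto _).comp this, (continuous_snd.tendsto _).comp this⟩

end LinearEquation

section Scheme

theorem Mesh.pt_le (m : Mesh) {i j : ℕ} (hij : i ≤ j) (hj : j ≤ m.n) : m.pt i ≤ m.pt j := by
  induction j, hij using Nat.le_induction with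
  | base => exact le_rfl
  | succ j _ ih => exact (ih (by omega)).trans (m.mono j (by omega)).le

theorem IsStraightSol.solvesLinearOn {N : ℝ → ℝ → ℝ} {a c : ℝ} {m : Mesh} {u u' : ℝ → ℝ}
    (h : IsStraightSol N a c m u u') (h0 : m.pt 0 = a) (hn : m.pt m.n = c) {i : ℕ}
    (hi : i < m.n) :
    SolvesLinearOn (alphaC N (m.pt i) (u' (m.pt i)) (u (m.pt i))) u u'
      (Icc (m.pt i) (m.pt (i + 1))) := by
  have hsub : Icc (m.pt i) (m.pt (i + 1)) ⊆ Icc a c :=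
    Icc_subset_Icc (h0 ▸ m.pt_le (Nat.zero_le i) hi.le) (hn ▸ m.pt_le hi le_rfl)
  exact fun x hx => ⟨(h.1 x (hsub hx)).mono hsub, h.2.2 i hi x hx⟩

variable {N : ℝ → ℝ → ℝ} {a b c : ℝ} {m : Mesh}

theorem Mesh.pt_mem_Icc (h0 : m.pt 0 = a) (hn : m.pt m.n = c) {i : ℕ} (hi : i ≤ m.n) :
    m.pt i ∈ Icc a c :=
  ⟨h0 ▸ m.pt_le (Nat.zero_le i) hi, hn ▸ m.pt_le hi le_rfl⟩

theorem Mesh.forall_mem_Icc {P : ℝ → Prop} (h0 : m.pt 0 = a) (hn : m.pt m.n = c) (ha : P a)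
    (step : ∀ i < m.n, P (m.pt i) → ∀ x ∈ Icc (m.pt i) (m.pt (i + 1)), P x) :
    ∀ x ∈ Icc a c, P x := by
  have main : ∀ i ≤ m.n, ∀ x ∈ Icc a (m.pt i), P x := by
    intro i
    induction i with
    | zero => intro _ x hx; rwa [le_antisymm (h0 ▸ hx.2) hx.1]
    | succ i ih =>
      intro hi x hx
      have hi' : i ≤ m.n := Nat.le_of_succ_le hi
      rcases le_total x (m.pt i) with hxi | hxi
      · exact ih hi' x ⟨hx.1, hxi⟩
      · exact step i hi (ih hi' _ ⟨h0 ▸ m.pt_le (Nat.zero_le i) hi', le_rfl⟩) x ⟨hxi, hx.2⟩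
  exact hn ▸ main m.n le_rfl

theorem IsStraightSol.eq_zero {u u' : ℝ → ℝ} (h : IsStraightSol N a c m u u')
    (h0 : m.pt 0 = a) (hn : m.pt m.n = c) (hu : u a = 0) (hu' : u' a = 0) :
    ∀ x ∈ Icc a c, u x = 0 ∧ u' x = 0 := by
  refine m.forall_mem_Icc h0 hn ⟨hu, hu'⟩ fun i hi ih => ?_
  refine (h.solvesLinearOn h0 hn hi).eq_zero ?_ ih.1 ih.2
  unfold alphaC
  fun_prop

theorem IsStraightSol.nonneg {u u' : ℝ → ℝ} (h : IsStraightSol N a c m u u')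
    (hH : HypH N a b) (h0 : m.pt 0 = a) (hn : m.pt m.n = c) (hcb : c ≤ b)
    (hu : u a = 0) (hu' : 0 ≤ u' a) : ∀ x ∈ Icc a c, 0 ≤ u x ∧ 0 ≤ u' x := by
  rcases hu'.eq_or_lt with hz | hpos
  · intro x hx
    obtain ⟨hx0, hx1⟩ := h.eq_zero h0 hn hu hz.symm x hx
    exact ⟨hx0.ge, hx1.ge⟩
  suffices ∀ x ∈ Icc a c, 0 ≤ u x ∧ 0 < u' x from fun x hx => ⟨(this x hx).1, (this x hx).2.le⟩
  refine m.forall_mem_Icc h0 hn ⟨hu.ge, hpos⟩ fun i hi ⟨ih0, ih1⟩ x hx => ?_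
  have hs := h.solvesLinearOn h0 hn hi
  have hmem := Icc_subset_Icc_right hcb (m.pt_mem_Icc h0 hn hi.le)
  obtain ⟨g0, g1⟩ := growth_of_convex_where_nonneg (fun x hx => (hs x hx).1)
    (fun x hx => (hs x hx).2)
    (fun x hx hux => mul_nonneg (alphaC_nonneg hH hmem ih1.le ih0 hx.1) hux) ih0 ih1 x hx
  exact ⟨(add_nonneg ih0 (mul_nonneg ih1.le (sub_nonneg.2 hx.1))).trans g0, ih1.trans_le g1⟩

theorem IsStraightSol.sub_growth {u u' v v' : ℝ → ℝ} (hN : ContDiff ℝ 2 (Function.uncurry N))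
    (hH : HypH N a b) (h0 : m.pt 0 = a) (hn : m.pt m.n = c) (hcb : c ≤ b)
    (hu : IsStraightSol N a c m u u') (hv : IsStraightSol N a c m v v')
    (hua : u a = 0) (hva : v a = 0) (hu' : 0 ≤ u' a) (huv : u' a < v' a) :
    ∀ x ∈ Icc a c, (v' a - u' a) * (x - a) ≤ v x - u x ∧ v' a - u' a ≤ v' x - u' x := by
  have hd : 0 < v' a - u' a := sub_pos.2 huv
  have hnn := hu.nonneg hH h0 hn hcb hua hu'
  refine m.forall_mem_Icc h0 hn (by simp [hua, hva]) fun i hi ⟨ih0, ih1⟩ x hx => ?_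
  have hmem := m.pt_mem_Icc h0 hn hi.le
  have hmem' := Icc_subset_Icc_right hcb hmem
  have hsub : Icc (m.pt i) (m.pt (i + 1)) ⊆ Icc a c :=
    Icc_subset_Icc hmem.1 (m.pt_mem_Icc h0 hn hi).2
  have hsu := hu.solvesLinearOn h0 hn hi
  have hsv := hv.solvesLinearOn h0 hn hi
  obtain ⟨hq, hp⟩ := hnn _ hmem
  have hw0 : 0 ≤ v (m.pt i) - u (m.pt i) :=
    (mul_nonneg hd.le (sub_nonneg.2 hmem.1)).trans ih0
  have hw1 : 0 < v' (m.pt i) - u' (m.pt i) := hd.trans_le ih1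
  obtain ⟨g0, g1⟩ := growth_of_convex_where_nonneg
    (w := fun x => v x - u x) (w' := fun x => v' x - u' x)
    (fun x hx => (hsv x hx).1.sub (hsu x hx).1)
    (fun x hx => (hsv x hx).2.sub (hsu x hx).2)
    (fun x hx hwx => by
      have hα := alphaC_nonneg hH hmem' hp hq hx.1
      have hαβ := alphaC_mono hN hH hmem' hp (sub_pos.1 hw1).le hq (sub_nonneg.1 hw0) hx.1
      exact sub_nonneg.2 (mul_le_mul hαβ (sub_nonneg.1 hwx) (hnn x (hsub hx)).1
        (hα.trans hαβ))) hw0 hw1 x hx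
  refine ⟨?_, ih1.trans g1⟩
  have := mul_le_mul_of_nonneg_right ih1 (sub_nonneg.2 hx.1)
  linarith

theorem continuousOn_slope {U U' : ℝ → ℝ → ℝ} (hN : ContDiff ℝ 2 (Function.uncurry N))
    (h0 : m.pt 0 = a) (hn : m.pt m.n = c)
    (hU : ∀ ν : ℝ, 0 ≤ ν → IsStraightSol N a c m (U ν) (U' ν) ∧ U ν a = 0 ∧ U' ν a = ν) :
    ∀ x ∈ Icc a c, ContinuousOn (fun ν => U ν x) (Ici 0) ∧
      ContinuousOn (fun ν => U' ν x) (Ici 0) := by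
  refine m.forall_mem_Icc h0 hn ⟨?_, ?_⟩ fun i hi ⟨ih0, ih1⟩ x hx => ?_
  · exact continuousOn_const.congr fun ν hν => (hU ν hν).2.1
  · exact continuousOn_id.congr fun ν hν => (hU ν hν).2.2
  have c0 : Continuous fun q => N q (m.pt i) :=
    hN.continuous.comp (Continuous.prodMk_left (m.pt i))
  have c1 : Continuous fun q => pd1 N q (m.pt i) :=
    continuous_iff_continuousAt.2 fun q => (hasDerivAt_pd1_left hN q _).continuousAt
  have c2 : Continuous fun q => pd2 N q (m.pt i) :=
    continuous_iff_continuousAt.2 fun q => (hasDerivAt_pd2_left hN q _).continuousAt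
  have main : ∀ ν ∈ Ici (0 : ℝ), _ := fun ν hν =>
    tendsto_of_solvesLinearOn (l := nhdsWithin ν (Ici 0)) (u := U) (u' := U')
      (m := fun ν => pd1 N (U ν (m.pt i)) (m.pt i) * U' ν (m.pt i) + pd2 N (U ν (m.pt i)) (m.pt i))
      (k := fun ν => N (U ν (m.pt i)) (m.pt i))
      ((((c1.comp_continuousOn ih0).mul ih1).add (c2.comp_continuousOn ih0)) ν hν)
      ((c0.comp_continuousOn ih0) ν hν)
      (eventually_mem_nhdsWithin.mono fun s hs => (hU s hs).1.solvesLinearOn h0 hn hi)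
      ((hU ν hν).1.solvesLinearOn h0 hn hi) (ih0 ν hν) (ih1 ν hν) x hx
  exact ⟨fun ν hν => (main ν hν).1, fun ν hν => (main ν hν).2⟩

end Scheme

/-- under hypothesis (H) there is a unique initial slope `ν* > 0` with
`ũ_{ν*}(c) = u_b`. -/
theorem straight_scheme_unique_shooting_slope
    (a b c ub : ℝ) (hab : a < b) (hub : 0 < ub) (hc : c ∈ Ioo a b)
    (N : ℝ → ℝ → ℝ) (hN : ContDiff ℝ 2 (Function.uncurry N))
    (hH : HypH N a b)
    (ms : Mesh) (hms0 : ms.pt 0 = a) (hmsn : ms.pt ms.n = c)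
    (U U' : ℝ → ℝ → ℝ)
    (hU : ∀ ν : ℝ, 0 ≤ ν →
      IsStraightSol N a c ms (U ν) (U' ν) ∧ U ν a = 0 ∧ U' ν a = ν) :
    ∃! ν : ℝ, 0 < ν ∧ U ν c = ub := by
  have hac : 0 < c - a := sub_pos.2 hc.1
  have hcmem : c ∈ Icc a c := ⟨hc.1.le, le_rfl⟩
  have growth : ∀ ν₁ ν₂ : ℝ, 0 ≤ ν₁ → ν₁ < ν₂ → (ν₂ - ν₁) * (c - a) ≤ U ν₂ c - U ν₁ c := by
    intro ν₁ ν₂ h₁ h₁₂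
    obtain ⟨s₁, z₁, d₁⟩ := hU ν₁ h₁
    obtain ⟨s₂, z₂, d₂⟩ := hU ν₂ (h₁.trans h₁₂.le)
    have := (s₁.sub_growth hN hH hms0 hmsn hc.2.le s₂ z₁ z₂ (d₁.symm ▸ h₁)
      (by rwa [d₁, d₂]) c hcmem).1
    rwa [d₁, d₂] at this
  have hzero : U 0 c = 0 := by
    obtain ⟨s, z, d⟩ := hU 0 le_rfl
    exact (s.eq_zero hms0 hmsn z d c hcmem).1
  have hmono : StrictMonoOn (fun ν => U ν c) (Ici 0) := fun ν₁ h₁ ν₂ _ h₁₂ =>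
    sub_pos.1 ((mul_pos (sub_pos.2 h₁₂) hac).trans_le (growth ν₁ ν₂ h₁ h₁₂))
  have hT : 0 < ub / (c - a) := div_pos hub hac
  have hle : ub ≤ U (ub / (c - a)) c := by
    have := growth 0 _ le_rfl hT
    rwa [sub_zero, div_mul_cancel₀ _ hac.ne', hzero, sub_zero] at this
  obtain ⟨ν, hν, hνc⟩ := intermediate_value_Icc hT.le
    ((continuousOn_slope hN hms0 hmsn hU c hcmem).1.mono Icc_subset_Ici_self)
    (show ub ∈ Icc (U 0 c) (U (ub / (c - a)) c) from ⟨hzero.trans_le hub.le, hle⟩)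
  have hν0 : 0 < ν := hν.1.lt_of_ne fun h => hub.ne' (by rw [← hνc, ← h]; exact hzero)
  exact ⟨ν, ⟨hν0, hνc⟩, fun μ hμ => hmono.injOn hμ.1.le hν0.le (hμ.2.trans hνc.symm)⟩
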